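/- Let ℓ ∈ 𝕃, ν ∈ (0,1], suppose the maximum margin γ := max_{‖λ‖₁=1} min_i (−(Aλ)_i) is positive, and let {λ_t} be boosting iterates whose steps satisfy α_qub_i ≤ α_i ≤ α_opt_i for every i ≥ 1 (where α_qub_i := ν·γ_i/C_i⁴ and α_opt_i := ν times a minimizer of α ↦ L(A(λ_{i−1}+α·v_i))). Then every γ_i satisfies γ_i ≥ γ, and for every t ≥ 0: L(Aλ_t) ≤ ℓ(0)·exp(−t·ν(2−ν)·γ²/(2C₁⁶)). In particular, for any ε ∈ (0, ℓ(0)), if t ≥ (2C₁⁶/(ν(2−ν)γ²))·ln(ℓ(0)/ε), then L(Aλ_t) ≤ ε. -/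

import Mathlib

open Real Finset

noncomputable section

/-- The property that `C` is a valid curvature constant at level `z`:
`C ≥ 1` and `C⁻¹ ≤ eˣ / ℓ⁽ⁱ⁾(x) ≤ C` for all `x ≤ z` and `i ∈ {0,1,2}`. -/
def CBound (ℓ : ℝ → ℝ) (z C : ℝ) : Prop :=
  1 ≤ C ∧ ∀ x ≤ z, ∀ i ≤ 2,
    C⁻¹ ≤ Real.exp x / iteratedDeriv i ℓ x ∧ Real.exp x / iteratedDeriv i ℓ x ≤ C

/-- `C_ℓ(z)`: the least valid curvature constant at level `z`. -/
def Cconst (ℓ : ℝ → ℝ) (z : ℝ) : ℝ := sInf {C : ℝ | CBound ℓ z C}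

/-- Membership in the class `𝕃`: positive, twice continuously differentiable,
strictly convex, and `C_ℓ(z) < ∞` (i.e. some valid constant exists) for every `z`. -/
def MemL (ℓ : ℝ → ℝ) : Prop :=
  (∀ x, 0 < ℓ x) ∧ ContDiff ℝ 2 ℓ ∧ StrictConvexOn ℝ Set.univ ℓ ∧
    ∀ z : ℝ, ∃ C : ℝ, CBound ℓ z C

/-- Membership in `𝕃_∞`: in `𝕃` and moreover `C_ℓ(z) → 1` as `z → −∞`. -/
def MemLinf (ℓ : ℝ → ℝ) : Prop :=
  MemL ℓ ∧ Filter.Tendsto (Cconst ℓ) Filter.atBot (nhds 1)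

variable {m n : ℕ}

/-- The empirical risk `L(Aλ) = (1/m) Σᵢ ℓ((Aλ)ᵢ)`. -/
def LL (ℓ : ℝ → ℝ) (A : Matrix (Fin m) (Fin n) ℝ) (lam : Fin n → ℝ) : ℝ :=
  (∑ i, ℓ (A.mulVec lam i)) / m

/-- The gradient vector `∇L(Aλ)`, with `i`-th entry `ℓ'((Aλ)ᵢ)/m`. -/
def gradL (ℓ : ℝ → ℝ) (A : Matrix (Fin m) (Fin n) ℝ) (lam : Fin n → ℝ) : Fin m → ℝ :=
  fun i => deriv ℓ (A.mulVec lam i) / m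

/-- `‖Aᵀ ∇L(Aλ)‖_∞`. -/
def gInf (ℓ : ℝ → ℝ) (A : Matrix (Fin m) (Fin n) ℝ) (lam : Fin n → ℝ) : ℝ :=
  ⨆ j : Fin n, |∑ i, gradL ℓ A lam i * A i j|

/-- `‖∇L(Aλ)‖₁`. -/
def gOne (ℓ : ℝ → ℝ) (A : Matrix (Fin m) (Fin n) ℝ) (lam : Fin n → ℝ) : ℝ :=
  ∑ i, |gradL ℓ A lam i|

/-- `γ̂ = ‖Aᵀ∇L(Aλ)‖_∞ / ‖∇L(Aλ)‖₁`. -/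
def gammaHat (ℓ : ℝ → ℝ) (A : Matrix (Fin m) (Fin n) ℝ) (lam : Fin n → ℝ) : ℝ :=
  gInf ℓ A lam / gOne ℓ A lam

/-- `C = C_ℓ(ℓ⁻¹(m · L(Aλ)))`. -/
def Cstep (ℓ : ℝ → ℝ) (A : Matrix (Fin m) (Fin n) ℝ) (lam : Fin n → ℝ) : ℝ :=
  Cconst ℓ (Function.invFun ℓ ((m : ℝ) * LL ℓ A lam))

/-- The (minimum `l¹`) margin `M(Aλ) = min_k (−(Aλ)_k) / ‖λ‖₁`. -/
def margin (A : Matrix (Fin m) (Fin n) ℝ) (lam : Fin n → ℝ) : ℝ :=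
  ⨅ k : Fin m, (-(A.mulVec lam k)) / (∑ j, |lam j|)

/-- The maximum margin `γ = max_{‖λ‖₁=1} min_i (−(Aλ)ᵢ)`. -/
def gammaMax (A : Matrix (Fin m) (Fin n) ℝ) : ℝ :=
  sSup {r : ℝ | ∃ lam : Fin n → ℝ, (∑ j, |lam j|) = 1 ∧ r = ⨅ i : Fin m, -(A.mulVec lam i)}

/-- Boosting iterates: `λ₀ = 0`, `λ_t = λ_{t-1} + α_t • v_t` where `v_t` is a signed
standard basis vector satisfying `∇L(Aλ_{t-1})ᵀ A v_t = −‖Aᵀ∇L(Aλ_{t-1})‖_∞`. -/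
def IsBoostSeq (ℓ : ℝ → ℝ) (A : Matrix (Fin m) (Fin n) ℝ)
    (lam : ℕ → Fin n → ℝ) (α : ℕ → ℝ) (v : ℕ → Fin n → ℝ) : Prop :=
  lam 0 = 0 ∧
  (∀ t : ℕ, 1 ≤ t → lam t = lam (t-1) + α t • v t) ∧
  (∀ t : ℕ, 1 ≤ t → ∃ s : ℝ, (s = 1 ∨ s = -1) ∧ ∃ j : Fin n, v t = s • (Pi.single j (1:ℝ) : Fin n → ℝ)) ∧
  (∀ t : ℕ, 1 ≤ t →
    ∑ i, gradL ℓ A (lam (t-1)) i * A.mulVec (v t) i = - gInf ℓ A (lam (t-1)))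

/-- The quantity `Υ_ν(γ)`. -/
def Upsilon (ν γ : ℝ) : ℝ :=
  ((2/ν) * Real.log 2 - (2/ν) * Real.log ((1+γ) ^ (1-ν) + (1-γ) ^ (1-ν))
      - Real.log (1-γ^2)) /
    (Real.log (1+γ) - Real.log (1-γ))

lemma cb_facts {ℓ : ℝ → ℝ} (hpos : ∀ x, 0 < ℓ x) {z C : ℝ} (h : CBound ℓ z C) {x : ℝ} (hx : x ≤ z) :
    0 < deriv ℓ x ∧ 0 < deriv (deriv ℓ) x ∧ deriv (deriv ℓ) x ≤ C * Real.exp x ∧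
      Real.exp x ≤ C * ℓ x ∧ ℓ x ≤ C * Real.exp x ∧ Real.exp x ≤ C * deriv ℓ x := by
  obtain ⟨h1, h2⟩ := h
  have hC : 0 < C := by linarith
  have e := Real.exp_pos x
  have key : ∀ d : ℝ, C⁻¹ ≤ Real.exp x / d → Real.exp x / d ≤ C →
      0 < d ∧ d ≤ C * Real.exp x ∧ Real.exp x ≤ C * d := by
    intro d ha hb
    have hd : 0 < d := by
      by_contra hd
      have : Real.exp x / d ≤ 0 := div_nonpos_of_nonneg_of_nonpos e.le (not_lt.mp hd)
      have : 0 < C⁻¹ := inv_pos.mpr hC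
      linarith
    refine ⟨hd, ?_, ?_⟩
    · rw [inv_le_iff_one_le_mul₀ hC, div_mul_eq_mul_div, le_div_iff₀ hd] at ha
      linarith
    · rwa [div_le_iff₀ hd] at hb
  have k0 := h2 x hx 0 (by norm_num)
  have k1 := h2 x hx 1 (by norm_num)
  have k2 := h2 x hx 2 (by norm_num)
  have e2 : iteratedDeriv 2 ℓ = deriv (deriv ℓ) := by
    rw [iteratedDeriv_succ, iteratedDeriv_one]
  rw [iteratedDeriv_zero] at k0
  rw [iteratedDeriv_one] at k1
  rw [e2] at k2
  have r0 := key _ k0.1 k0.2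
  have r1 := key _ k1.1 k1.2
  have r2 := key _ k2.1 k2.2
  exact ⟨r1.1, r2.1, r2.2.1, r0.2.2, r0.2.1, r1.2.2⟩

lemma cconst_bound {ℓ : ℝ → ℝ} (hℓ : MemL ℓ) (z : ℝ) : CBound ℓ z (Cconst ℓ z) := by
  obtain ⟨hpos, -, -, hex⟩ := hℓ
  obtain ⟨C0, hC0⟩ := hex z
  have hne : {C : ℝ | CBound ℓ z C}.Nonempty := ⟨C0, hC0⟩
  have hone : 1 ≤ Cconst ℓ z := le_csInf hne (fun C hC => hC.1)
  refine ⟨hone, ?_⟩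
  intro x hx i hi
  have hq : 0 < Real.exp x / iteratedDeriv i ℓ x :=
    lt_of_lt_of_le (inv_pos.mpr (by linarith [hC0.1])) (hC0.2 x hx i hi).1
  constructor
  · rw [inv_le_comm₀ (by linarith) hq]
    refine le_csInf hne (fun C hC => ?_)
    have := (hC.2 x hx i hi).1
    rwa [inv_le_comm₀ (by linarith [hC.1]) hq] at this
  · exact le_csInf hne (fun C hC => (hC.2 x hx i hi).2)

lemma cconst_mono {ℓ : ℝ → ℝ} (hℓ : MemL ℓ) {z w : ℝ} (h : z ≤ w) : Cconst ℓ z ≤ Cconst ℓ w := by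
  refine csInf_le ⟨1, fun C hC => hC.1⟩ ?_
  have hb := cconst_bound hℓ w
  exact ⟨hb.1, fun x hx => hb.2 x (hx.trans h)⟩

lemma deriv_pos_of_mem {ℓ : ℝ → ℝ} (hℓ : MemL ℓ) (x : ℝ) : 0 < deriv ℓ x :=
  (cb_facts hℓ.1 (cconst_bound hℓ x) le_rfl).1

lemma memL_strictMono {ℓ : ℝ → ℝ} (hℓ : MemL ℓ) : StrictMono ℓ :=
  strictMono_of_deriv_pos (deriv_pos_of_mem hℓ)

lemma memL_diff {ℓ : ℝ → ℝ} (hℓ : MemL ℓ) : Differentiable ℝ ℓ :=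
  hℓ.2.1.differentiable (by norm_num)

lemma memL_diff2 {ℓ : ℝ → ℝ} (hℓ : MemL ℓ) : Differentiable ℝ (deriv ℓ) := by
  have h : ContDiff ℝ (1 + 1) ℓ := by
    have := hℓ.2.1
    norm_num
    exact this
  exact (contDiff_succ_iff_deriv.mp h).2.2.differentiable (by norm_num)

lemma memL_inv {ℓ : ℝ → ℝ} (hℓ : MemL ℓ) {y : ℝ} (hy : 0 < y) : ℓ (Function.invFun ℓ y) = y := by
  apply Function.invFun_eq
  have hcont := (memL_diff hℓ).continuous
  -- a point below
  obtain ⟨a, ha⟩ : ∃ a, ℓ a ≤ y := by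
    set C := Cconst ℓ 0
    have hb := cconst_bound hℓ 0
    have hC : 0 < C := by have := hb.1; change 1 ≤ C at this; linarith
    refine ⟨min 0 (Real.log (y / C)), ?_⟩
    have h := (cb_facts hℓ.1 hb (min_le_left 0 (Real.log (y / C)))).2.2.2.2.1
    refine h.trans ?_
    have h2 : Real.exp (min 0 (Real.log (y / C))) ≤ y / C := by
      rw [← Real.exp_log (div_pos hy hC)]
      refine Real.exp_le_exp.mpr ?_
      rw [Real.exp_log (div_pos hy hC)]
      exact min_le_right _ _
    calc C * Real.exp (min 0 (Real.log (y / C))) ≤ C * (y / C) := by gcongr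
      _ = y := by field_simp
  obtain ⟨b, hb⟩ : ∃ b, y ≤ ℓ b := by
    have hd := deriv_pos_of_mem hℓ 0
    refine ⟨y / deriv ℓ 0, ?_⟩
    have hb : 0 < y / deriv ℓ 0 := div_pos hy hd
    have := hℓ.2.2.1.convexOn.deriv_le_slope (Set.mem_univ 0) (Set.mem_univ (y / deriv ℓ 0)) hb
      ((memL_diff hℓ) 0)
    rw [slope_def_field, sub_zero, le_div_iff₀ hb] at this
    have e : deriv ℓ 0 * (y / deriv ℓ 0) = y := by field_simp
    have := hℓ.1 0
    linarith
  have := mem_range_of_exists_le_of_exists_ge hcont ⟨a, ha⟩ ⟨b, hb⟩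
  exact this

lemma taylor_ub {f f' f'' : ℝ → ℝ} (h1 : ∀ x, HasDerivAt f (f' x) x)
    (h2 : ∀ x, HasDerivAt f' (f'' x) x) {q K : ℝ} (hq : 0 ≤ q)
    (hK : ∀ x ∈ Set.Icc 0 q, f'' x ≤ K) : f q ≤ f 0 + f' 0 * q + K * q ^ 2 / 2 := by
  have a1 : ∀ x ∈ Set.Icc 0 q, f' x ≤ f' 0 + K * x := by
    intro x hx
    have hd : ∀ y, HasDerivAt (fun y => f' y - K * y) (f'' y - K * 1) y := fun y =>
      (h2 y).sub ((hasDerivAt_id y).const_mul K)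
    have : AntitoneOn (fun y => f' y - K * y) (Set.Icc 0 q) := by
      apply antitoneOn_of_deriv_nonpos (convex_Icc 0 q)
      · exact fun y _ => (hd y).continuousAt.continuousWithinAt
      · exact fun y _ => (hd y).differentiableAt.differentiableWithinAt
      · intro y hy
        rw [(hd y).deriv]
        have := hK y (interior_subset hy)
        linarith
    have := this ⟨le_rfl, hq⟩ hx hx.1
    simp only at this
    linarith
  have hd : ∀ y, HasDerivAt (fun y => f y - f' 0 * y - K / 2 * y ^ 2)
      (f' y - f' 0 * 1 - K / 2 * (2 * y)) y := fun y => by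
    have := ((h1 y).sub ((hasDerivAt_id y).const_mul (f' 0))).sub
      ((hasDerivAt_pow 2 y).const_mul (K / 2))
    refine HasDerivAt.congr_deriv this ?_
    norm_num
  have : AntitoneOn (fun y => f y - f' 0 * y - K / 2 * y ^ 2) (Set.Icc 0 q) := by
    apply antitoneOn_of_deriv_nonpos (convex_Icc 0 q)
    · exact fun y _ => (hd y).continuousAt.continuousWithinAt
    · exact fun y _ => (hd y).differentiableAt.differentiableWithinAt
    · intro y hy
      rw [(hd y).deriv]
      have := a1 y (interior_subset hy)
      linarith
  have := this ⟨le_rfl, hq⟩ ⟨hq, le_rfl⟩ hq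
  simp only at this
  linarith

lemma step_bound {m : ℕ} {ℓ : ℝ → ℝ} (hℓ : MemL ℓ) (x b : Fin m → ℝ) (hb : ∀ i, |b i| ≤ 1)
    {z C g ν a s : ℝ} (hν : 0 < ν) (hν1 : ν ≤ 1) (hC : CBound ℓ z C)
    (hz : ℓ z = ∑ i, ℓ (x i)) (hg : 0 ≤ g)
    (hgr : ∑ i, deriv ℓ (x i) * b i = -(g * ∑ i, deriv ℓ (x i)))
    (hs : ∀ β : ℝ, ∑ i, ℓ (x i + s * b i) ≤ ∑ i, ℓ (x i + β * b i))
    (ha : ν * (g / C ^ 4) ≤ a) (has : a ≤ ν * s) :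
    ∑ i, ℓ (x i + a * b i) ≤ (∑ i, ℓ (x i)) * (1 - ν * (2 - ν) * g ^ 2 / (2 * C ^ 6)) := by
  have hC1 := hC.1
  have hC0 : 0 < C := by linarith
  set F : ℝ → ℝ := fun α => ∑ i, ℓ (x i + α * b i) with hF
  set q := ν * (g / C ^ 4) with hq
  have hq0 : 0 ≤ q := by positivity
  have ha0 : 0 ≤ a := hq0.trans ha
  have hs0 : 0 ≤ s := by
    by_contra h
    have := mul_neg_of_pos_of_neg hν (not_le.mp h)
    linarith
  have has' : a ≤ s := has.trans (by nlinarith)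
  have hconv : ConvexOn ℝ Set.univ F := by
    refine ⟨convex_univ, ?_⟩
    intro u _ w _ c d hc hd hcd
    simp only [hF, smul_eq_mul]
    rw [Finset.mul_sum, Finset.mul_sum, ← Finset.sum_add_distrib]
    refine Finset.sum_le_sum fun i _ => ?_
    have := hℓ.2.2.1.convexOn.2 (Set.mem_univ (x i + u * b i)) (Set.mem_univ (x i + w * b i)) hc hd hcd
    simp only [smul_eq_mul] at this
    convert this using 2
    have : d = 1 - c := by linarith
    subst this; ring
  have hdec : ∀ u w, u ≤ w → w ≤ s → F w ≤ F u := by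
    intro u w huw hws
    have := hconv.le_max_of_mem_Icc (Set.mem_univ u) (Set.mem_univ s) ⟨huw, hws⟩
    rwa [max_eq_left (hs u)] at this
  have hF0 : F 0 = ∑ i, ℓ (x i) := by simp [hF]
  have hlev : ∀ α, F α ≤ F 0 → ∀ i, x i + α * b i ≤ z := by
    intro α hα i
    rw [← (memL_strictMono hℓ).le_iff_le, hz, ← hF0]
    refine le_trans ?_ hα
    exact Finset.single_le_sum (f := fun i => ℓ (x i + α * b i)) (fun j _ => (hℓ.1 _).le) (Finset.mem_univ i)
  set G := ∑ i, deriv ℓ (x i) with hG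
  have hSG : F 0 ≤ C ^ 2 * G := by
    rw [hF0, hG, Finset.mul_sum]
    refine Finset.sum_le_sum fun i _ => ?_
    have hx : x i ≤ z := by simpa using hlev 0 le_rfl i
    obtain ⟨-, -, -, -, h5, h6⟩ := cb_facts hℓ.1 hC hx
    nlinarith [mul_le_mul_of_nonneg_left h6 hC0.le]
  have h1 : ∀ α, HasDerivAt F (∑ i, deriv ℓ (x i + α * b i) * b i) α := by
    intro α
    apply HasDerivAt.fun_sum
    intro i _
    have hi : HasDerivAt (fun α : ℝ => x i + α * b i) (b i) α := by
      simpa using ((hasDerivAt_id α).mul_const (b i)).const_add (x i)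
    exact (memL_diff hℓ _).hasDerivAt.comp α hi
  have h2 : ∀ α, HasDerivAt (fun α => ∑ i, deriv ℓ (x i + α * b i) * b i)
      (∑ i, deriv (deriv ℓ) (x i + α * b i) * b i * b i) α := by
    intro α
    apply HasDerivAt.fun_sum
    intro i _
    have hi : HasDerivAt (fun α : ℝ => x i + α * b i) (b i) α := by
      simpa using ((hasDerivAt_id α).mul_const (b i)).const_add (x i)
    exact ((memL_diff2 hℓ _).hasDerivAt.comp α hi).mul_const (b i)
  have hT := taylor_ub h1 h2 hq0 (K := C ^ 4 * G) (by
    intro α hα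
    have hα' : F α ≤ F 0 := hdec 0 α hα.1 (hα.2.trans (ha.trans has'))
    have : ∑ i, deriv (deriv ℓ) (x i + α * b i) * b i * b i ≤ C ^ 2 * F α := by
      rw [hF]; simp only
      rw [Finset.mul_sum]
      refine Finset.sum_le_sum fun i _ => ?_
      obtain ⟨-, k2, k3, k4, -, -⟩ := cb_facts hℓ.1 hC (hlev α hα' i)
      have hbb : b i * b i ≤ 1 := by
        have := hb i
        rw [abs_le] at this
        nlinarith
      nlinarith [mul_le_mul_of_nonneg_left k4 hC0.le, mul_le_mul_of_nonneg_left hbb k2.le]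
    calc _ ≤ C ^ 2 * F α := this
      _ ≤ C ^ 2 * (C ^ 2 * G) := by
        gcongr; linarith
      _ = C ^ 4 * G := by ring)
  simp only [zero_mul, add_zero] at hT
  rw [hgr] at hT
  have hfa : F a ≤ F q := hdec q a ha has'
  have e1 : F 0 + -(g * G) * q + C ^ 4 * G * q ^ 2 / 2
      = F 0 - (C ^ 2 * G) * (ν * (2 - ν) * g ^ 2 / (2 * C ^ 6)) := by
    rw [hq]; field_simp; ring
  rw [e1] at hT
  have hk : 0 ≤ ν * (2 - ν) * g ^ 2 / (2 * C ^ 6) := by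
    have : 0 ≤ 2 - ν := by linarith
    positivity
  have := mul_le_mul_of_nonneg_right hSG hk
  change F a ≤ _
  rw [← hF0]
  linarith

/-- under separability (`γ > 0`) and steps between the quadratic-upper-bound
step and the shrunk optimal step: `γ_i ≥ γ`, geometric decrease of the risk, and
`O((1/γ²)·ln(1/ε))` iterations suffice to reach risk `ε`. -/
theorem risk_conv_separable {m n : ℕ} (hm : 0 < m) (hn : 0 < n)
    (A : Matrix (Fin m) (Fin n) ℝ) (hA : ∀ i j, |A i j| ≤ 1)
    (ℓ : ℝ → ℝ) (hℓ : MemL ℓ)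
    (ν : ℝ) (hν : ν ∈ Set.Ioc (0:ℝ) 1)
    (hγ : 0 < gammaMax A)
    (lam : ℕ → Fin n → ℝ) (α : ℕ → ℝ) (v : ℕ → Fin n → ℝ)
    (hseq : IsBoostSeq ℓ A lam α v)
    (αstar : ℕ → ℝ)
    (hαstar : ∀ i : ℕ, 1 ≤ i → ∀ β : ℝ,
      LL ℓ A (lam (i-1) + αstar i • v i) ≤ LL ℓ A (lam (i-1) + β • v i))
    (hstep : ∀ i : ℕ, 1 ≤ i →
      ν * (gammaHat ℓ A (lam (i-1)) / (Cstep ℓ A (lam (i-1)))^4) ≤ α i ∧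
      α i ≤ ν * αstar i) :
    (∀ i : ℕ, 1 ≤ i → gammaMax A ≤ gammaHat ℓ A (lam (i-1))) ∧
    (∀ t : ℕ, LL ℓ A (lam t) ≤
      ℓ 0 * Real.exp (-(t:ℝ) * ν * (2-ν) * (gammaMax A)^2 / (2 * (Cstep ℓ A (lam 0))^6))) ∧
    (∀ ε : ℝ, 0 < ε → ε < ℓ 0 → ∀ t : ℕ,
      (2 * (Cstep ℓ A (lam 0))^6 / (ν * (2-ν) * (gammaMax A)^2)) * Real.log (ℓ 0 / ε) ≤ (t:ℝ) →
      LL ℓ A (lam t) ≤ ε) := by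
  have hmR : (0:ℝ) < m := by exact_mod_cast hm
  have : Nonempty (Fin m) := ⟨⟨0, hm⟩⟩
  have : Nonempty (Fin n) := ⟨⟨0, hn⟩⟩
  obtain ⟨hν0, hν1⟩ := hν
  have hgpos : ∀ l i, 0 < gradL ℓ A l i := fun l i => div_pos (deriv_pos_of_mem hℓ _) hmR
  have hOne : ∀ l, gOne ℓ A l = ∑ i, gradL ℓ A l i := fun l =>
    Finset.sum_congr rfl fun i _ => abs_of_pos (hgpos l i)
  have hOnepos : ∀ l, 0 < gOne ℓ A l := fun l => by
    rw [hOne]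
    exact Finset.sum_pos (fun i _ => hgpos l i) Finset.univ_nonempty
  have hInfle : ∀ l j, |∑ i, gradL ℓ A l i * A i j| ≤ gInf ℓ A l := fun l j =>
    le_ciSup (f := fun j => |∑ i, gradL ℓ A l i * A i j|) (Set.finite_range _).bddAbove j
  have hInf0 : ∀ l, 0 ≤ gInf ℓ A l := fun l =>
    (abs_nonneg _).trans (hInfle l ⟨0, hn⟩)
  have hHat0 : ∀ l, 0 ≤ gammaHat ℓ A l := fun l => div_nonneg (hInf0 l) (hOnepos l).le
  have hHat : ∀ l, gammaMax A ≤ gammaHat ℓ A l := by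
    intro l
    refine Real.sSup_le ?_ (hHat0 l)
    rintro r ⟨μ, hμ, rfl⟩
    rw [gammaHat, le_div_iff₀ (hOnepos l), hOne, Finset.mul_sum]
    calc ∑ i, (⨅ i, -(A.mulVec μ i)) * gradL ℓ A l i
        ≤ ∑ i, (-(A.mulVec μ i)) * gradL ℓ A l i := by
          refine Finset.sum_le_sum fun i _ => ?_
          exact mul_le_mul_of_nonneg_right
            (ciInf_le (f := fun i => -(A.mulVec μ i)) (Set.finite_range _).bddBelow i) (hgpos l i).le
      _ = ∑ j, (∑ i, gradL ℓ A l i * A i j) * (-μ j) := by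
          simp only [Matrix.mulVec, dotProduct, Finset.sum_mul, ← Finset.sum_neg_distrib]
          rw [Finset.sum_comm]
          refine Finset.sum_congr rfl fun j _ => Finset.sum_congr rfl fun i _ => ?_
          ring
      _ ≤ ∑ j, gInf ℓ A l * |μ j| := by
          refine Finset.sum_le_sum fun j _ => ?_
          refine (le_abs_self _).trans ?_
          rw [abs_mul, abs_neg]
          exact mul_le_mul_of_nonneg_right (hInfle l j) (abs_nonneg _)
      _ = gInf ℓ A l := by rw [← Finset.mul_sum, hμ, mul_one]
  obtain ⟨h0, hs1, hs2, hs3⟩ := hseq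
  have hmL : ∀ l, (m:ℝ) * LL ℓ A l = ∑ i, ℓ (A.mulVec l i) := fun l => by
    rw [LL]; field_simp
  have hSpos : ∀ l, 0 < ∑ i, ℓ (A.mulVec l i) := fun l =>
    Finset.sum_pos (fun i _ => hℓ.1 _) Finset.univ_nonempty
  have hLpos : ∀ l, 0 < LL ℓ A l := fun l => div_pos (hSpos l) hmR
  have hz : ∀ l, ℓ (Function.invFun ℓ ((m:ℝ) * LL ℓ A l)) = ∑ i, ℓ (A.mulVec l i) := fun l => by
    rw [memL_inv hℓ (mul_pos hmR (hLpos l)), hmL]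
  have hCb : ∀ l, CBound ℓ (Function.invFun ℓ ((m:ℝ) * LL ℓ A l)) (Cstep ℓ A l) :=
    fun l => cconst_bound hℓ _
  have hmono : ∀ l l', LL ℓ A l ≤ LL ℓ A l' → Cstep ℓ A l ≤ Cstep ℓ A l' := by
    intro l l' h
    refine cconst_mono hℓ ?_
    rw [← (memL_strictMono hℓ).le_iff_le, hz, hz, ← hmL, ← hmL]
    exact mul_le_mul_of_nonneg_left h hmR.le
  have hstepL : ∀ t, LL ℓ A (lam (t + 1)) ≤ LL ℓ A (lam t) *
      (1 - ν * (2 - ν) * gammaHat ℓ A (lam t) ^ 2 / (2 * Cstep ℓ A (lam t) ^ 6)) := by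
    intro t
    have ht : 1 ≤ t + 1 := by omega
    have q1 := hs1 (t + 1) ht
    have q2 := hs2 (t + 1) ht
    have q3 := hs3 (t + 1) ht
    have q4 := hαstar (t + 1) ht
    have q5 := hstep (t + 1) ht
    simp only [Nat.add_sub_cancel] at q1 q3 q4 q5
    have hexp : ∀ β : ℝ, (m:ℝ) * LL ℓ A (lam t + β • v (t + 1))
        = ∑ i, ℓ (A.mulVec (lam t) i + β * A.mulVec (v (t + 1)) i) := by
      intro β
      rw [hmL]
      simp [Matrix.mulVec_add, Matrix.mulVec_smul]
    have hb : ∀ i, |A.mulVec (v (t + 1)) i| ≤ 1 := by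
      intro i
      obtain ⟨s, hs, j, hj⟩ := q2
      rw [hj, Matrix.mulVec_smul]
      simp only [Matrix.mulVec_single_one, Pi.smul_apply, smul_eq_mul, Matrix.col_apply, abs_mul]
      have : |s| = 1 := by rcases hs with rfl | rfl <;> simp
      rw [this, one_mul]
      exact hA i j
    have hkey := step_bound hℓ (A.mulVec (lam t)) (A.mulVec (v (t + 1))) hb hν0 hν1
      (hCb (lam t)) (hz (lam t)) (hHat0 (lam t)) (s := αstar (t + 1)) (a := α (t + 1)) ?_ ?_ q5.1 q5.2
    · rw [← hexp, ← hmL, ← q1, mul_assoc] at hkey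
      exact le_of_mul_le_mul_left hkey hmR
    · have e1 : ∑ i, deriv ℓ (A.mulVec (lam t) i) * A.mulVec (v (t + 1)) i
          = m * ∑ i, gradL ℓ A (lam t) i * A.mulVec (v (t + 1)) i := by
        rw [Finset.mul_sum]
        refine Finset.sum_congr rfl fun i _ => ?_
        rw [gradL]; field_simp
      have e2 : ∑ i, deriv ℓ (A.mulVec (lam t) i) = m * gOne ℓ A (lam t) := by
        rw [hOne, Finset.mul_sum]
        refine Finset.sum_congr rfl fun i _ => ?_
        rw [gradL]; field_simp
      rw [e1, e2, q3, gammaHat]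
      have := (hOnepos (lam t)).ne'
      field_simp
    · intro β
      rw [← hexp, ← hexp]
      exact mul_le_mul_of_nonneg_left (q4 β) hmR.le
  have h2ν : 0 < 2 - ν := by linarith
  have hCpos : ∀ l, 0 < Cstep ℓ A l := fun l => by linarith [(hCb l).1]
  have hdec : ∀ t, LL ℓ A (lam t) ≤ LL ℓ A (lam 0) := by
    intro t
    induction t with
    | zero => exact le_rfl
    | succ t ih =>
      refine (hstepL t).trans (le_trans ?_ ih)
      have hc := hCpos (lam t)
      have : 0 ≤ ν * (2 - ν) * gammaHat ℓ A (lam t) ^ 2 / (2 * Cstep ℓ A (lam t) ^ 6) := by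
        positivity
      have := hLpos (lam t)
      nlinarith
  have hL0 : LL ℓ A (lam 0) = ℓ 0 := by
    rw [LL, h0]; simp
    field_simp
  set γ := gammaMax A with hγdef
  set C1 := Cstep ℓ A (lam 0) with hC1
  have hC1pos : 0 < C1 := hCpos _
  have hmain : ∀ t : ℕ, LL ℓ A (lam t) ≤
      ℓ 0 * Real.exp (-(t:ℝ) * ν * (2-ν) * γ^2 / (2 * C1^6)) := by
    intro t
    induction t with
    | zero => simp [hL0]
    | succ t ih =>
      have hc := hCpos (lam t)
      have hle : ν * (2 - ν) * γ ^ 2 / (2 * C1 ^ 6)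
          ≤ ν * (2 - ν) * gammaHat ℓ A (lam t) ^ 2 / (2 * Cstep ℓ A (lam t) ^ 6) := by
        have k1 := hHat (lam t)
        have k2 := hmono _ _ (hdec t)
        have k3 := hHat0 (lam t)
        gcongr
      have hx : 1 - ν * (2 - ν) * gammaHat ℓ A (lam t) ^ 2 / (2 * Cstep ℓ A (lam t) ^ 6)
          ≤ Real.exp (-(ν * (2 - ν) * γ ^ 2 / (2 * C1 ^ 6))) := by
        have := Real.add_one_le_exp (-(ν * (2 - ν) * γ ^ 2 / (2 * C1 ^ 6)))
        linarith
      calc LL ℓ A (lam (t + 1)) ≤ _ := hstepL t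
        _ ≤ LL ℓ A (lam t) * Real.exp (-(ν * (2 - ν) * γ ^ 2 / (2 * C1 ^ 6))) :=
          mul_le_mul_of_nonneg_left hx (hLpos _).le
        _ ≤ (ℓ 0 * Real.exp (-(t:ℝ) * ν * (2-ν) * γ^2 / (2 * C1^6))) *
            Real.exp (-(ν * (2 - ν) * γ ^ 2 / (2 * C1 ^ 6))) :=
          mul_le_mul_of_nonneg_right ih (Real.exp_pos _).le
        _ = _ := by
          rw [mul_assoc, ← Real.exp_add]
          congr 2
          push_cast
          ring
  refine ⟨fun i _ => hHat _, hmain, ?_⟩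
  intro ε hε hεl t ht
  refine (hmain t).trans ?_
  have hℓ0 := hℓ.1 0
  have hk : Real.log (ℓ 0 / ε) ≤ (t:ℝ) * ν * (2-ν) * γ^2 / (2 * C1^6) := by
    have hp : 0 < ν * (2-ν) * γ^2 / (2 * C1^6) := by positivity
    have := mul_le_mul_of_nonneg_right ht hp.le
    have e : 2 * C1^6 / (ν * (2-ν) * γ^2) * Real.log (ℓ 0 / ε) * (ν * (2-ν) * γ^2 / (2 * C1^6))
        = Real.log (ℓ 0 / ε) := by
      field_simp
    rw [e] at this
    refine this.trans (le_of_eq ?_)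
    ring
  have hexp : Real.exp (-(t:ℝ) * ν * (2-ν) * γ^2 / (2 * C1^6)) ≤ ε / ℓ 0 := by
    rw [← Real.exp_log (div_pos hε hℓ0)]
    refine Real.exp_le_exp.mpr ?_
    rw [← inv_div (ℓ 0) ε, Real.log_inv]
    refine le_trans (le_of_eq ?_) (neg_le_neg hk)
    ring
  calc _ ≤ ℓ 0 * (ε / ℓ 0) := mul_le_mul_of_nonneg_left hexp hℓ0.le
    _ = ε := by field_simp
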